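/- For all f, g ∈ L¹(ℝ³), the function p̄ ↦ (1/p⁰)Q⁺(f,g)(p̄) is defined a.e., belongs to L¹(ℝ³), and satisfies ‖(1/p⁰)Q⁺(f,g)‖ ≤ C‖f‖·‖g‖. -/

import Mathlib

/-!
For a fixed direction `ω`, the collision map `(p, q) ↦ (p', q')` is an involution which preserves the
measure `dp dq / (p⁰ q⁰)`. Given this, Tonelli's theorem yields
`∫∫∫ |f(p')| |g(q')| dω dq dp / (p⁰ q⁰) = ∫ dω ∫∫ |f(p)| |g(q)| dp dq / (p⁰ q⁰) ≤ 4π ‖f‖ ‖g‖`,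
because `p⁰, q⁰ ≥ 1` and the sphere has area `4π`; the claim follows with `S₀ ≤ C₁`
(`lintegral_collision`, `lintegral_gain_le`).

The invariance is a one-dimensional fact. The collision map moves `(p, q)` along the line
`t ↦ (p + t ω̂, q - t ω̂)`, so by translation invariance of Lebesgue measure it suffices to treat each
such line (`lintegral_eq_lintegral_lines`). With `s = ω̂·p` as coordinate and `m = ω̂·(p + q)`, the
energies on the line are `√(A + s²)` and `√(B + (m - s)²)` with `A, B ≥ 1`, and the collision is the
map `refl1 A B m`. In the 1+1 dimensional Minkowski plane it sends the energy-momentum vector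
`(√(A + s²), s)` to its reflection across the line spanned by the total vector `(e, m)`. Hence it is
an involution and conserves the total energy `E(s)`. Differentiating `E(refl1 s) = E(s)`, and using
that `E'(s) · p⁰ q⁰` changes sign under the reflection, gives
`|refl1'(s)| = p⁰' q⁰' / (p⁰ q⁰)` (`abs_deriv_refl1`), which is the invariance of `ds / (p⁰ q⁰)`.
-/

open MeasureTheory Real

noncomputable section

/-- Momentum space `ℝ³`. -/
abbrev E3 : Type := EuclideanSpace ℝ (Fin 3)

/-- The scalar product associated with the Bianchi type I metric coefficients `α = a(t)`,
`β = b(t)`: `p̄·q̄ = α²p¹q¹ + β²(p²q² + p³q³)`. -/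
def mdot (α β : ℝ) (p q : E3) : ℝ :=
  α ^ 2 * p 0 * q 0 + β ^ 2 * (p 1 * q 1 + p 2 * q 2)

/-- `p⁰ = √(1 + |p̄|²)` where `|p̄|² = p̄·p̄`. -/
def pZ (α β : ℝ) (p : E3) : ℝ := Real.sqrt (1 + mdot α β p p)

/-- `ω` normalized to unit length for the metric norm. -/
def omHat (α β : ℝ) (ω : E3) : E3 := (Real.sqrt (mdot α β ω ω))⁻¹ • ω

/-- The total energy `e = p⁰ + q⁰`. -/
def collE (α β : ℝ) (p q : E3) : ℝ := pZ α β p + pZ α β q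

/-- The function `C(p̄, q̄, ω)` of Glassey's representation of post-collisional momenta. -/
def collC (α β : ℝ) (p q ω : E3) : ℝ :=
  2 * pZ α β p * pZ α β q * collE α β p q *
      mdot α β (omHat α β ω) ((pZ α β q)⁻¹ • q - (pZ α β p)⁻¹ • p) /
    (collE α β p q ^ 2 - mdot α β (omHat α β ω) (p + q) ^ 2)

/-- The post-collisional momentum `p̄′ = p̄ + C(p̄,q̄,ω)ω̂`. -/
def pPr (α β : ℝ) (p q ω : E3) : E3 := p + collC α β p q ω • omHat α β ω

/-- The post-collisional momentum `q̄′ = q̄ − C(p̄,q̄,ω)ω̂`. -/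
def qPr (α β : ℝ) (p q ω : E3) : E3 := q - collC α β p q ω • omHat α β ω

/-- The surface measure on the unit sphere `S² ⊂ ℝ³`. -/
def sphMeas : Measure (Metric.sphere (0 : E3) 1) := (volume : Measure E3).toSphere

/-- The gain term `Q⁺(f,g)`. -/
def Qplus (α β : ℝ) (S₀ : E3 → E3 → E3 → E3 → ℝ) (f g : E3 → ℝ) (p : E3) : ℝ :=
  α * β ^ 2 *
    ∫ q : E3, (pZ α β q)⁻¹ *
      ∫ ω : Metric.sphere (0 : E3) 1,
        f (pPr α β p q ω) * g (qPr α β p q ω) *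
          S₀ p q (pPr α β p q ω) (qPr α β p q ω) ∂sphMeas

/-- The loss term `Q⁻(f,g)`. -/
def Qminus (α β : ℝ) (S₀ : E3 → E3 → E3 → E3 → ℝ) (f g : E3 → ℝ) (p : E3) : ℝ :=
  α * β ^ 2 *
    ∫ q : E3, (pZ α β q)⁻¹ *
      ∫ ω : Metric.sphere (0 : E3) 1,
        f p * g q * S₀ p q (pPr α β p q ω) (qPr α β p q ω) ∂sphMeas

/-- The collision operator `Q = Q⁺ − Q⁻`. -/
def Qcoll (α β : ℝ) (S₀ : E3 → E3 → E3 → E3 → ℝ) (f g : E3 → ℝ) (p : E3) : ℝ :=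
  Qplus α β S₀ f g p - Qminus α β S₀ f g p

/-- The space `L¹(ℝ³)`. -/
abbrev L1 : Type := Lp ℝ 1 (volume : Measure E3)

/-- Membership in `X_r = {f ∈ L¹(ℝ³) : f ≥ 0 a.e., ‖f‖ ≤ r}`. -/
def memX (r : ℝ) (f : L1) : Prop := (0 ≤ᵐ[volume] ⇑f) ∧ ‖f‖ ≤ r

end

/-! ### Integration along parallel lines -/

/-- Disintegration of Lebesgue measure along the lines of direction `v`, where `s` is a coordinate
measuring the position on these lines: weighting by `1_{[0,1]}(s x)` counts each line once. In
particular, functions with equal integrals over all such lines have equal integrals. -/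
theorem lintegral_eq_lintegral_lines (v : E3 × E3) (s : E3 × E3 → ℝ) (hs : Measurable s)
    (hsv : ∀ x t, s (x + t • v) = s x + t) (F : E3 × E3 → ENNReal) (hF : Measurable F) :
    ∫⁻ x, F x = ∫⁻ x, (Set.Icc (0 : ℝ) 1).indicator 1 (s x) * ∫⁻ t : ℝ, F (x + t • v) := by
  have hI : Measurable ((Set.Icc (0 : ℝ) 1).indicator (1 : ℝ → ENNReal)) :=
    measurable_one.indicator measurableSet_Icc
  set I := (Set.Icc (0 : ℝ) 1).indicator (1 : ℝ → ENNReal) with hIdef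
  have : (volume : Measure (E3 × E3)).IsAddRightInvariant := by
    rw [Measure.volume_eq_prod]; infer_instance
  have h1 : ∀ a : ℝ, ∫⁻ t, I (a + t) = 1 := by
    intro a
    rw [lintegral_add_left_eq_self I a, hIdef, lintegral_indicator_one measurableSet_Icc]
    simp
  calc ∫⁻ x, F x = ∫⁻ x, ∫⁻ t, F x * I (s x + t) := by
        refine lintegral_congr fun x => ?_
        rw [lintegral_const_mul _ (by fun_prop), h1, mul_one]
    _ = ∫⁻ t, ∫⁻ x, F x * I (s x + t) :=
        lintegral_lintegral_swap (by unfold Function.uncurry; fun_prop)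
    _ = ∫⁻ t : ℝ, ∫⁻ x, F (x + (-t) • v) * I (s x) := by
        refine lintegral_congr fun t => ?_
        rw [← lintegral_add_right_eq_self (fun x => F x * I (s x + t)) ((-t) • v)]
        refine lintegral_congr fun x => ?_
        rw [hsv]; simp
    _ = ∫⁻ x, ∫⁻ t : ℝ, F (x + (-t) • v) * I (s x) :=
        lintegral_lintegral_swap (by unfold Function.uncurry; fun_prop)
    _ = _ := by
        refine lintegral_congr fun x => ?_
        rw [lintegral_mul_const _ (by fun_prop), mul_comm]
        congr 1
        exact lintegral_neg_eq_self (μ := volume) (fun t : ℝ => F (x + t • v))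

/-! ### The collision on a line -/

section OneDim

variable {A B m : ℝ}

/-- The energy `√(A + s²)` of a particle with longitudinal momentum `s` and squared transverse
mass `A`. -/
noncomputable def en (A s : ℝ) : ℝ := √(A + s ^ 2)

/-- The collision on a line: the new longitudinal momentum of the first particle, where `s` and
`m - s` are the longitudinal momenta of the two particles before the collision. -/
noncomputable def refl1 (A B m s : ℝ) : ℝ :=
  s + 2 * (en A s + en B (m - s)) * ((m - s) * en A s - s * en B (m - s)) /
    ((en A s + en B (m - s)) ^ 2 - m ^ 2)

theorem en_sq (hA : 1 ≤ A) (s : ℝ) : en A s ^ 2 = A + s ^ 2 := Real.sq_sqrt (by positivity)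

theorem abs_lt_en (hA : 1 ≤ A) (s : ℝ) : |s| < en A s :=
  Real.lt_sqrt_of_sq_lt (by rw [sq_abs]; linarith)

theorem en_pos (hA : 1 ≤ A) (s : ℝ) : 0 < en A s := (abs_nonneg s).trans_lt (abs_lt_en hA s)

theorem gap_pos (hA : 1 ≤ A) (hB : 1 ≤ B) (m s : ℝ) :
    0 < (en A s + en B (m - s)) ^ 2 - m ^ 2 := by
  have h1 := abs_lt.1 (abs_lt_en hA s)
  have h2 := abs_lt.1 (abs_lt_en hB (m - s))
  nlinarith

theorem en_eq_of_sq (A s r : ℝ) (hr : 0 < r) (h : r ^ 2 = A + s ^ 2) : en A s = r := by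
  rw [en, ← h, Real.sqrt_sq hr.le]

/-- The reflection across a future-directed timelike vector `(e, m)` maps future-directed timelike
vectors `(a, s)` to vectors of positive energy. -/
theorem reflect_pos {a s e m : ℝ} (hs : |s| < a) (he : |m| < e) :
    0 < -a + 2 * e * (a * e - s * m) / (e ^ 2 - m ^ 2) := by
  have h1 := abs_lt.1 hs
  have h2 := abs_lt.1 he
  have hd : 0 < e ^ 2 - m ^ 2 := by nlinarith
  have : -a + 2 * e * (a * e - s * m) / (e ^ 2 - m ^ 2)
      = ((a - s) * (e + m) ^ 2 + (a + s) * (e - m) ^ 2) / (2 * (e ^ 2 - m ^ 2)) := by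
    field_simp; ring
  rw [this]
  apply div_pos _ (by linarith)
  have : 0 < (a - s) * (e + m) ^ 2 := mul_pos (by linarith) (by nlinarith)
  have : 0 < (a + s) * (e - m) ^ 2 := mul_pos (by linarith) (by nlinarith)
  linarith

theorem abs_lt_energy (hA : 1 ≤ A) (hB : 1 ≤ B) (m s : ℝ) :
    |m| < en A s + en B (m - s) := by
  have h1 := abs_lt_en hA s
  have h2 := abs_lt_en hB (m - s)
  have := abs_add_le s (m - s)
  rw [add_sub_cancel] at this
  linarith

/-- The energy of the first particle after the collision is the time component of the reflection of
`(en A s, s)` across the total energy-momentum vector. -/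
theorem en_refl1_left (hA : 1 ≤ A) (hB : 1 ≤ B) (m s : ℝ) :
    en A (refl1 A B m s) = -en A s + 2 * (en A s + en B (m - s)) *
      (en A s * (en A s + en B (m - s)) - s * m) / ((en A s + en B (m - s)) ^ 2 - m ^ 2) := by
  apply en_eq_of_sq _ _ _ (reflect_pos (abs_lt_en hA s) (abs_lt_energy hA hB m s))
  have h := en_sq hA s
  have hd := gap_pos hA hB m s
  unfold refl1
  generalize en A s = a at *
  generalize en B (m - s) = b at *
  obtain rfl : A = a ^ 2 - s ^ 2 := by linarith
  field_simp
  ring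

theorem en_refl1_right (hA : 1 ≤ A) (hB : 1 ≤ B) (m s : ℝ) :
    en B (m - refl1 A B m s) = -en B (m - s) + 2 * (en A s + en B (m - s)) *
      (en B (m - s) * (en A s + en B (m - s)) - (m - s) * m) /
        ((en A s + en B (m - s)) ^ 2 - m ^ 2) := by
  apply en_eq_of_sq _ _ _ (reflect_pos (abs_lt_en hB (m - s)) (abs_lt_energy hA hB m s))
  have h := en_sq hB (m - s)
  have hd := gap_pos hA hB m s
  unfold refl1
  generalize en A s = a at *
  generalize en B (m - s) = b at *
  obtain rfl : B = b ^ 2 - (m - s) ^ 2 := by linarith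
  field_simp
  ring

theorem energy_refl1 (hA : 1 ≤ A) (hB : 1 ≤ B) (m s : ℝ) :
    en A (refl1 A B m s) + en B (m - refl1 A B m s) = en A s + en B (m - s) := by
  have hd := gap_pos hA hB m s
  rw [en_refl1_left hA hB, en_refl1_right hA hB]
  field_simp
  ring

/-- The numerator of the derivative of the total energy changes sign under the collision. -/
theorem slope_refl1 (hA : 1 ≤ A) (hB : 1 ≤ B) (m s : ℝ) :
    (m - refl1 A B m s) * en A (refl1 A B m s) - refl1 A B m s * en B (m - refl1 A B m s)
      = -((m - s) * en A s - s * en B (m - s)) := by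
  have hd := gap_pos hA hB m s
  rw [en_refl1_left hA hB, en_refl1_right hA hB]
  unfold refl1
  generalize en A s = a at *
  generalize en B (m - s) = b at *
  field_simp
  ring

theorem refl1_refl1 (hA : 1 ≤ A) (hB : 1 ≤ B) (m s : ℝ) :
    refl1 A B m (refl1 A B m s) = s := by
  have h1 := slope_refl1 hA hB m s
  have h2 := energy_refl1 hA hB m s
  rw [refl1, h1, h2]
  conv_lhs => enter [1]; rw [refl1]
  ring

theorem hasDerivAt_en (hA : 1 ≤ A) (s : ℝ) : HasDerivAt (en A) (s / en A s) s := by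
  have h : HasDerivAt (fun s : ℝ => A + s ^ 2) (2 * s) s := by
    simpa using (hasDerivAt_pow 2 s).const_add A
  have h2 := h.sqrt (by positivity)
  exact h2.congr_deriv (mul_div_mul_left _ _ two_ne_zero)

theorem hasDerivAt_energy (hA : 1 ≤ A) (hB : 1 ≤ B) (m s : ℝ) :
    HasDerivAt (fun s => en A s + en B (m - s))
      (-((m - s) * en A s - s * en B (m - s)) / (en A s * en B (m - s))) s := by
  have h1 := hasDerivAt_en hA s
  have h2 := (hasDerivAt_en hB (m - s)).comp s ((hasDerivAt_id s).const_sub m)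
  refine (h1.add h2).congr_deriv ?_
  have := en_pos hA s
  have := en_pos hB (m - s)
  field_simp
  ring

theorem differentiable_refl1 (hA : 1 ≤ A) (hB : 1 ≤ B) (m : ℝ) :
    Differentiable ℝ (refl1 A B m) := by
  have h1 : Differentiable ℝ (en A) := fun s => (hasDerivAt_en hA s).differentiableAt
  have h2 : Differentiable ℝ (en B) := fun s => (hasDerivAt_en hB s).differentiableAt
  have h3 : Differentiable ℝ fun s => en B (m - s) := h2.comp (by fun_prop)
  unfold refl1
  apply Differentiable.add (by fun_prop)
  apply Differentiable.div (by fun_prop) (by fun_prop)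
  exact fun s => (gap_pos hA hB m s).ne'

theorem abs_deriv_refl1 (hA : 1 ≤ A) (hB : 1 ≤ B) (m s : ℝ) :
    |deriv (refl1 A B m) s| = en A (refl1 A B m s) * en B (m - refl1 A B m s) /
      (en A s * en B (m - s)) := by
  have hD : ∀ s, HasDerivAt (refl1 A B m) (deriv (refl1 A B m) s) s :=
    fun s => (differentiable_refl1 hA hB m s).hasDerivAt
  have ha := en_pos hA s
  have hb := en_pos hB (m - s)
  have ha' := en_pos hA (refl1 A B m s)
  have hb' := en_pos hB (m - refl1 A B m s)
  by_cases hk : (m - s) * en A s - s * en B (m - s) = 0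
  -- At a fixed point, differentiating `refl1 ∘ refl1 = id` shows that the derivative is `±1`.
  · have hfix : refl1 A B m s = s := by simp [refl1, hk]
    have h1 : HasDerivAt (fun s => refl1 A B m (refl1 A B m s))
        (deriv (refl1 A B m) (refl1 A B m s) * deriv (refl1 A B m) s) s :=
      (hD (refl1 A B m s)).comp s (hD s)
    rw [funext (refl1_refl1 hA hB m), hfix] at h1
    have h2 := h1.unique (hasDerivAt_id' s)
    rw [hfix, div_self (by positivity)]
    rcases mul_self_eq_one_iff.1 h2 with h | h <;> simp [h]
  -- Elsewhere the derivative is determined by energy conservation.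
  · have h1 := (hasDerivAt_energy hA hB m (refl1 A B m s)).comp s (hD s)
    have h2 : (fun s => en A s + en B (m - s)) ∘ refl1 A B m = fun s => en A s + en B (m - s) :=
      funext (energy_refl1 hA hB m)
    rw [h2] at h1
    have h3 := h1.unique (hasDerivAt_energy hA hB m s)
    rw [slope_refl1 hA hB] at h3
    have h4 : deriv (refl1 A B m) s = -(en A (refl1 A B m s) * en B (m - refl1 A B m s) /
      (en A s * en B (m - s))) := by
      generalize (m - s) * en A s - s * en B (m - s) = k at *
      field_simp at h3 ⊢
      linarith
    rw [h4, abs_neg, abs_of_pos (by positivity)]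

/-- The measure `ds / (p⁰ q⁰)` is invariant under the collision on a line. -/
theorem lintegral_refl1 (hA : 1 ≤ A) (hB : 1 ≤ B) (m : ℝ) (h : ℝ → ENNReal) :
    ∫⁻ s, ENNReal.ofReal ((en A s * en B (m - s))⁻¹) * h (refl1 A B m s) =
      ∫⁻ s, ENNReal.ofReal ((en A s * en B (m - s))⁻¹) * h s := by
  have hinv : Function.Involutive (refl1 A B m) := refl1_refl1 hA hB m
  have := lintegral_image_eq_lintegral_abs_deriv_mul (s := Set.univ) (f := refl1 A B m)
    (f' := deriv (refl1 A B m)) MeasurableSet.univ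
    (fun s _ => (differentiable_refl1 hA hB m s).hasDerivAt.hasDerivWithinAt)
    hinv.injective.injOn (fun s => ENNReal.ofReal ((en A s * en B (m - s))⁻¹) * h s)
  rw [Set.image_univ, hinv.surjective.range_eq, Measure.restrict_univ] at this
  rw [this]
  refine lintegral_congr fun s => ?_
  rw [← mul_assoc, ← ENNReal.ofReal_mul (abs_nonneg _), abs_deriv_refl1 hA hB]
  have ha' := en_pos hA (refl1 A B m s)
  have hb' := en_pos hB (m - refl1 A B m s)
  congr 2
  field_simp

end OneDim

/-! ### The collision map on momentum space -/

section Geometry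

variable {α β : ℝ}

theorem mdot_self_nonneg (α β : ℝ) (p : E3) : 0 ≤ mdot α β p p := by
  have : mdot α β p p = (α * p 0) ^ 2 + (β * p 1) ^ 2 + (β * p 2) ^ 2 := by unfold mdot; ring
  rw [this]; positivity

theorem one_le_pZ (α β : ℝ) (p : E3) : 1 ≤ pZ α β p :=
  Real.one_le_sqrt.2 (by linarith [mdot_self_nonneg α β p])

theorem mdot_self_omHat (hα : 0 < α) (hβ : 0 < β) (ω : Metric.sphere (0 : E3) 1) :
    mdot α β (omHat α β ω) (omHat α β ω) = 1 := by
  have hne : (ω : E3) ≠ 0 := ne_zero_of_mem_unit_sphere ω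
  have hpos : 0 < mdot α β (ω : E3) ω := by
    refine lt_of_le_of_ne (mdot_self_nonneg α β _) fun h => hne ?_
    have h0 : (α * (ω : E3) 0) ^ 2 + (β * (ω : E3) 1) ^ 2 + (β * (ω : E3) 2) ^ 2 = 0 := by
      rw [h]; unfold mdot; ring
    have e0 : α * (ω : E3) 0 = 0 := by
      nlinarith [sq_nonneg (α * (ω : E3) 0), sq_nonneg (β * (ω : E3) 1), sq_nonneg (β * (ω : E3) 2)]
    have e1 : β * (ω : E3) 1 = 0 := by
      nlinarith [sq_nonneg (α * (ω : E3) 0), sq_nonneg (β * (ω : E3) 1), sq_nonneg (β * (ω : E3) 2)]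
    have e2 : β * (ω : E3) 2 = 0 := by
      nlinarith [sq_nonneg (α * (ω : E3) 0), sq_nonneg (β * (ω : E3) 1), sq_nonneg (β * (ω : E3) 2)]
    ext i
    fin_cases i
    · simpa [hα.ne'] using e0
    · simpa [hβ.ne'] using e1
    · simpa [hβ.ne'] using e2
  have h : mdot α β (omHat α β ω) (omHat α β ω)
      = (√(mdot α β (ω : E3) ω))⁻¹ ^ 2 * mdot α β (ω : E3) ω := by
    simp only [omHat]
    generalize (√(mdot α β (ω : E3) ω))⁻¹ = k
    simp only [mdot, PiLp.smul_apply, smul_eq_mul]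
    ring
  rw [h, inv_pow, Real.sq_sqrt hpos.le, inv_mul_cancel₀ hpos.ne']

theorem mdot_line_self (u p : E3) (t : ℝ) (hu : mdot α β u u = 1) :
    mdot α β (p + t • u) (p + t • u) = mdot α β p p + 2 * t * mdot α β u p + t ^ 2 := by
  have : mdot α β (p + t • u) (p + t • u)
      = mdot α β p p + 2 * t * mdot α β u p + t ^ 2 * mdot α β u u := by
    simp only [mdot, PiLp.add_apply, PiLp.smul_apply, smul_eq_mul]; ring
  rw [this, hu, mul_one]

theorem mdot_line (u p : E3) (t : ℝ) (hu : mdot α β u u = 1) :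
    mdot α β u (p + t • u) = mdot α β u p + t := by
  have : mdot α β u (p + t • u) = mdot α β u p + t * mdot α β u u := by
    simp only [mdot, PiLp.add_apply, PiLp.smul_apply, smul_eq_mul]; ring
  rw [this, hu, mul_one]

/-- The squared transverse mass `1 + |p|² - (u·p)²`, constant along lines of direction `u` when `u`
has metric length one. -/
noncomputable def tmass (α β : ℝ) (u p : E3) : ℝ := 1 + mdot α β p p - mdot α β u p ^ 2

/-- Cauchy-Schwarz, from `|p - (u·p) u|² ≥ 0`. -/
theorem one_le_tmass {u : E3} (hu : mdot α β u u = 1) (p : E3) : 1 ≤ tmass α β u p := by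
  have h := mdot_self_nonneg α β (p + (-mdot α β u p) • u)
  rw [mdot_line_self u p _ hu] at h
  unfold tmass
  nlinarith

theorem pZ_line {u : E3} (hu : mdot α β u u = 1) (p : E3) (t : ℝ) :
    pZ α β (p + t • u) = en (tmass α β u p) (mdot α β u p + t) := by
  unfold pZ en tmass
  rw [mdot_line_self u p t hu]
  ring_nf

/-- On the lines `t ↦ (p + t ω̂, q - t ω̂)` the collision map is given by `refl1`. -/
theorem collC_line {ω : E3} (hu : mdot α β (omHat α β ω) (omHat α β ω) = 1) (p q : E3) (t : ℝ) :
    collC α β (p + t • omHat α β ω) (q - t • omHat α β ω) ω =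
      refl1 (tmass α β (omHat α β ω) p) (tmass α β (omHat α β ω) q)
        (mdot α β (omHat α β ω) p + mdot α β (omHat α β ω) q) (mdot α β (omHat α β ω) p + t)
      - (mdot α β (omHat α β ω) p + t) := by
  unfold collC collE
  have ha := one_le_pZ α β (p + t • omHat α β ω)
  have hb := one_le_pZ α β (q + (-t) • omHat α β ω)
  rw [sub_eq_add_neg q, ← neg_smul]
  have hsum : p + t • omHat α β ω + (q + (-t) • omHat α β ω) = p + q := by module
  have hadd : mdot α β (omHat α β ω) (p + q)
      = mdot α β (omHat α β ω) p + mdot α β (omHat α β ω) q := by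
    simp only [mdot, PiLp.add_apply]; ring
  have hlin : ∀ (k l : ℝ) (x y : E3), mdot α β (omHat α β ω) (k • x - l • y)
      = k * mdot α β (omHat α β ω) x - l * mdot α β (omHat α β ω) y := by
    intro k l x y
    simp only [mdot, PiLp.sub_apply, PiLp.smul_apply, smul_eq_mul]; ring
  rw [hsum, hadd, hlin, mdot_line _ _ _ hu, mdot_line _ _ _ hu, refl1, add_sub_cancel_left]
  have e2 : mdot α β (omHat α β ω) p + mdot α β (omHat α β ω) q - (mdot α β (omHat α β ω) p + t)
      = mdot α β (omHat α β ω) q + -t := by ring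
  rw [e2, ← pZ_line hu, ← pZ_line hu]
  generalize pZ α β (p + t • omHat α β ω) = a at *
  generalize pZ α β (q + (-t) • omHat α β ω) = b at *
  have h1 : a ≠ 0 := by positivity
  have h2 : b ≠ 0 := by positivity
  congr 1
  field_simp

theorem measurable_mdot (α β : ℝ) : Measurable fun z : E3 × E3 => mdot α β z.1 z.2 := by
  unfold mdot; fun_prop

theorem measurable_pZ (α β : ℝ) : Measurable (pZ α β) := by
  unfold pZ mdot; fun_prop

theorem measurable_omHat (α β : ℝ) : Measurable (omHat α β) := by
  unfold omHat mdot; fun_prop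

theorem measurable_collC (α β : ℝ) :
    Measurable fun x : (E3 × E3) × E3 => collC α β x.1.1 x.1.2 x.2 := by
  have h1 := measurable_pZ α β
  have h2 := measurable_omHat α β
  have hdot : ∀ {F G : (E3 × E3) × E3 → E3}, Measurable F → Measurable G →
      Measurable fun x => mdot α β (F x) (G x) := fun hF hG =>
    (measurable_mdot α β).comp (hF.prodMk hG)
  have hp : Measurable fun x : (E3 × E3) × E3 => pZ α β x.1.1 := by fun_prop
  have hq : Measurable fun x : (E3 × E3) × E3 => pZ α β x.1.2 := by fun_prop
  have hn := hdot (h2.comp measurable_snd)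
    ((hq.inv.smul measurable_fst.snd).sub (hp.inv.smul measurable_fst.fst))
  have hd := hdot (h2.comp measurable_snd) (measurable_fst.fst.add measurable_fst.snd)
  exact (((((measurable_const.mul hp).mul hq).mul (hp.add hq)).mul hn).div
    (((hp.add hq).pow_const 2).sub (hd.pow_const 2)))

theorem measurable_pPr (α β : ℝ) :
    Measurable fun x : (E3 × E3) × E3 => pPr α β x.1.1 x.1.2 x.2 := by
  have h1 := measurable_collC α β
  have h2 := measurable_omHat α β
  unfold pPr
  fun_prop

theorem measurable_qPr (α β : ℝ) :
    Measurable fun x : (E3 × E3) × E3 => qPr α β x.1.1 x.1.2 x.2 := by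
  have h1 := measurable_collC α β
  have h2 := measurable_omHat α β
  unfold qPr
  fun_prop

/-- The collision map in direction `ω` preserves the measure `dp dq / (p⁰ q⁰)`. -/
theorem lintegral_collision (hα : 0 < α) (hβ : 0 < β) (ω : Metric.sphere (0 : E3) 1)
    (F : E3 × E3 → ENNReal) (hF : Measurable F) :
    ∫⁻ z : E3 × E3, ENNReal.ofReal ((pZ α β z.1 * pZ α β z.2)⁻¹) *
        F (pPr α β z.1 z.2 ω, qPr α β z.1 z.2 ω) =
      ∫⁻ z : E3 × E3, ENNReal.ofReal ((pZ α β z.1 * pZ α β z.2)⁻¹) * F z := by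
  have hu := mdot_self_omHat hα hβ ω
  have hpZ := measurable_pZ α β
  have hp : Measurable fun z : E3 × E3 => pPr α β z.1 z.2 ω :=
    (measurable_pPr α β).comp (measurable_id.prodMk measurable_const)
  have hq : Measurable fun z : E3 × E3 => qPr α β z.1 z.2 ω :=
    (measurable_qPr α β).comp (measurable_id.prodMk measurable_const)
  have hs : Measurable fun z : E3 × E3 => mdot α β (omHat α β ω) z.1 := by
    unfold mdot; fun_prop
  have hsv : ∀ (z : E3 × E3) (t : ℝ),
      mdot α β (omHat α β ω) (z + t • (omHat α β ω, -omHat α β ω)).1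
        = mdot α β (omHat α β ω) z.1 + t := fun z t => mdot_line _ _ _ hu
  rw [lintegral_eq_lintegral_lines _ _ hs hsv (fun z : E3 × E3 =>
      ENNReal.ofReal ((pZ α β z.1 * pZ α β z.2)⁻¹) *
        F (pPr α β z.1 z.2 ω, qPr α β z.1 z.2 ω)) (by fun_prop),
    lintegral_eq_lintegral_lines _ _ hs hsv (fun z : E3 × E3 =>
      ENNReal.ofReal ((pZ α β z.1 * pZ α β z.2)⁻¹) * F z) (by fun_prop)]
  refine lintegral_congr fun z => ?_
  congr 1
  obtain ⟨p, q⟩ := z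
  have hz : ∀ t : ℝ, (p, q) + t • (omHat α β ω, -omHat α β (ω : E3))
      = (p + t • omHat α β ω, q - t • omHat α β ω) := by
    intro t; ext1 <;> simp [sub_eq_add_neg]
  set u := omHat α β (ω : E3) with hudef
  set x := mdot α β u p with hx
  set m := x + mdot α β u q with hm
  set A := tmass α β u p with hA
  set B := tmass α β u q with hB
  have hw : ∀ t : ℝ, pZ α β (p + t • u) * pZ α β (q - t • u)
      = en A (x + t) * en B (m - (x + t)) := by
    intro t
    rw [sub_eq_add_neg q, ← neg_smul, pZ_line hu, pZ_line hu]
    congr 2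
    rw [hm]; ring
  have hP : ∀ t : ℝ, pPr α β (p + t • u) (q - t • u) ω
      = p + (refl1 A B m (x + t) - x) • u := by
    intro t
    rw [pPr, collC_line hu]
    module
  have hQ : ∀ t : ℝ, qPr α β (p + t • u) (q - t • u) ω
      = q - (refl1 A B m (x + t) - x) • u := by
    intro t
    rw [qPr, collC_line hu]
    module
  simp only [hz, hw, hP, hQ]
  have key := lintegral_refl1 (one_le_tmass hu p) (one_le_tmass hu q) m
    (fun r => F (p + (r - x) • u, q - (r - x) • u))
  rw [← lintegral_add_left_eq_self _ x, ← lintegral_add_left_eq_self (fun s =>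
    ENNReal.ofReal ((en (tmass α β u p) s * en (tmass α β u q) (m - s))⁻¹) *
      F (p + (s - x) • u, q - (s - x) • u)) x] at key
  simpa only [add_sub_cancel_left] using key

theorem sphMeas_univ : sphMeas Set.univ = ENNReal.ofReal (4 * π) := by
  rw [sphMeas, Measure.toSphere_apply_univ, EuclideanSpace.volume_ball_fin_three]
  simp only [finrank_euclideanSpace, Fintype.card_fin, ENNReal.ofReal_one, one_pow, one_mul]
  rw [show ((3 : ℕ) : ENNReal) = ENNReal.ofReal 3 by simp, ← ENNReal.ofReal_mul (by norm_num)]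
  congr 1
  ring

instance : IsFiniteMeasure sphMeas := by unfold sphMeas; infer_instance

theorem lintegral_gain_le (hα : 0 < α) (hβ : 0 < β) (F : E3 × E3 → ENNReal) (hF : Measurable F) :
    ∫⁻ z : E3 × E3, ENNReal.ofReal ((pZ α β z.1 * pZ α β z.2)⁻¹) *
        ∫⁻ ω : Metric.sphere (0 : E3) 1, F (pPr α β z.1 z.2 ω, qPr α β z.1 z.2 ω) ∂sphMeas ≤
      ENNReal.ofReal (4 * π) * ∫⁻ z, F z := by
  have hpZ := measurable_pZ α β
  have hp : Measurable fun x : (E3 × E3) × Metric.sphere (0 : E3) 1 => pPr α β x.1.1 x.1.2 x.2 :=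
    (measurable_pPr α β).comp (measurable_fst.prodMk (measurable_subtype_coe.comp measurable_snd))
  have hq : Measurable fun x : (E3 × E3) × Metric.sphere (0 : E3) 1 => qPr α β x.1.1 x.1.2 x.2 :=
    (measurable_qPr α β).comp (measurable_fst.prodMk (measurable_subtype_coe.comp measurable_snd))
  have hpq : Measurable fun x : (E3 × E3) × Metric.sphere (0 : E3) 1 =>
      F (pPr α β x.1.1 x.1.2 x.2, qPr α β x.1.1 x.1.2 x.2) := hF.comp (hp.prodMk hq)
  calc _ = ∫⁻ z : E3 × E3, ∫⁻ ω : Metric.sphere (0 : E3) 1,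
        ENNReal.ofReal ((pZ α β z.1 * pZ α β z.2)⁻¹) *
          F (pPr α β z.1 z.2 ω, qPr α β z.1 z.2 ω) ∂sphMeas := by
        refine lintegral_congr fun z => ?_
        rw [lintegral_const_mul]
        exact hpq.comp measurable_prodMk_left
    _ = ∫⁻ ω : Metric.sphere (0 : E3) 1, (∫⁻ z : E3 × E3,
        ENNReal.ofReal ((pZ α β z.1 * pZ α β z.2)⁻¹) *
          F (pPr α β z.1 z.2 ω, qPr α β z.1 z.2 ω)) ∂sphMeas := by
        apply lintegral_lintegral_swap
        unfold Function.uncurry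
        fun_prop
    _ ≤ ∫⁻ _ω : Metric.sphere (0 : E3) 1, (∫⁻ z, F z) ∂sphMeas := by
        refine lintegral_mono fun ω => ?_
        rw [lintegral_collision hα hβ ω F hF]
        refine lintegral_mono fun z => mul_le_of_le_one_left' ?_
        rw [ENNReal.ofReal_le_one]
        exact inv_le_one_of_one_le₀
          (one_le_mul_of_one_le_of_one_le (one_le_pZ _ _ _) (one_le_pZ _ _ _))
    _ = _ := by rw [lintegral_const, sphMeas_univ, mul_comm]

end Geometry

/-! ### The gain term -/

theorem statement_0
    (C₀ C₁ α β : ℝ) (hC₀ : 0 < C₀) (hC₁ : 0 < C₁) (hα : C₀ ≤ α) (hβ : C₀ ≤ β)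
    (S₀ : E3 → E3 → E3 → E3 → ℝ)
    (hS₀meas : Measurable fun x : (E3 × E3) × E3 × E3 => S₀ x.1.1 x.1.2 x.2.1 x.2.2)
    (hS₀nonneg : ∀ p q p' q', 0 ≤ S₀ p q p' q')
    (hS₀bdd : ∀ p q p' q', S₀ p q p' q' ≤ C₁)
    (hS₀symm : ∀ p q p' q', S₀ p q p' q' = S₀ p' q' p q)
    (f g : L1) :
    Integrable (fun p : E3 => (pZ α β p)⁻¹ * Qplus α β S₀ (⇑f) (⇑g) p) volume ∧
    ∫ p : E3, |(pZ α β p)⁻¹ * Qplus α β S₀ (⇑f) (⇑g) p| ≤ 4 * Real.pi * C₁ * α * β ^ 2 * ‖f‖ * ‖g‖ := by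
  have hα0 : 0 < α := hC₀.trans_le hα
  have hβ0 : 0 < β := hC₀.trans_le hβ
  have hf : Measurable f := (Lp.stronglyMeasurable f).measurable
  have hg : Measurable g := (Lp.stronglyMeasurable g).measurable
  have hpZ := measurable_pZ α β
  have hp : Measurable fun x : (E3 × E3) × Metric.sphere (0 : E3) 1 => pPr α β x.1.1 x.1.2 x.2 :=
    (measurable_pPr α β).comp (measurable_fst.prodMk (measurable_subtype_coe.comp measurable_snd))
  have hq : Measurable fun x : (E3 × E3) × Metric.sphere (0 : E3) 1 => qPr α β x.1.1 x.1.2 x.2 :=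
    (measurable_qPr α β).comp (measurable_fst.prodMk (measurable_subtype_coe.comp measurable_snd))
  have hmeas : AEStronglyMeasurable (fun p : E3 => (pZ α β p)⁻¹ * Qplus α β S₀ f g p) volume := by
    have hS : Measurable fun x : (E3 × E3) × Metric.sphere (0 : E3) 1 =>
        S₀ x.1.1 x.1.2 (pPr α β x.1.1 x.1.2 x.2) (qPr α β x.1.1 x.1.2 x.2) :=
      hS₀meas.comp (measurable_fst.prodMk (hp.prodMk hq))
    have h1 : Measurable fun z : E3 × E3 => ∫ ω : Metric.sphere (0 : E3) 1,
        f (pPr α β z.1 z.2 ω) * g (qPr α β z.1 z.2 ω) *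
          S₀ z.1 z.2 (pPr α β z.1 z.2 ω) (qPr α β z.1 z.2 ω) ∂sphMeas :=
      (StronglyMeasurable.integral_prod_right'
        (((hf.comp hp).mul (hg.comp hq)).mul hS).stronglyMeasurable).measurable
    have h2 : Measurable fun p : E3 => ∫ q : E3, (pZ α β q)⁻¹ *
        ∫ ω : Metric.sphere (0 : E3) 1, f (pPr α β p q ω) * g (qPr α β p q ω) *
          S₀ p q (pPr α β p q ω) (qPr α β p q ω) ∂sphMeas :=
      (StronglyMeasurable.integral_prod_right'
        ((hpZ.comp measurable_snd).inv.mul h1).stronglyMeasurable).measurable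
    exact (hpZ.inv.mul (h2.const_mul _)).aestronglyMeasurable
  have hG : Measurable fun z : E3 × E3 => ‖f z.1‖ₑ * ‖g z.2‖ₑ := by fun_prop
  have hpinv : ∀ p, ‖(pZ α β p)⁻¹‖ₑ = ENNReal.ofReal (pZ α β p)⁻¹ := fun p =>
    Real.enorm_of_nonneg (inv_nonneg.2 (zero_le_one.trans (one_le_pZ α β p)))
  have hbound : ∀ p, ‖(pZ α β p)⁻¹ * Qplus α β S₀ f g p‖ₑ ≤ ENNReal.ofReal (α * β ^ 2 * C₁) *
      ∫⁻ q, ENNReal.ofReal ((pZ α β p * pZ α β q)⁻¹) * ∫⁻ ω : Metric.sphere (0 : E3) 1,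
        ‖f (pPr α β p q ω)‖ₑ * ‖g (qPr α β p q ω)‖ₑ ∂sphMeas := by
    intro p
    have hinner : ∀ q, ‖∫ ω : Metric.sphere (0 : E3) 1,
        f (pPr α β p q ω) * g (qPr α β p q ω) *
          S₀ p q (pPr α β p q ω) (qPr α β p q ω) ∂sphMeas‖ₑ ≤
        ENNReal.ofReal C₁ * ∫⁻ ω : Metric.sphere (0 : E3) 1,
          ‖f (pPr α β p q ω)‖ₑ * ‖g (qPr α β p q ω)‖ₑ ∂sphMeas := by
      intro q
      refine (enorm_integral_le_lintegral_enorm _).trans ?_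
      rw [← lintegral_const_mul' _ _ ENNReal.ofReal_ne_top]
      refine lintegral_mono fun ω => ?_
      rw [enorm_mul, enorm_mul, mul_comm]
      gcongr
      rw [Real.enorm_of_nonneg (hS₀nonneg _ _ _ _)]
      exact ENNReal.ofReal_le_ofReal (hS₀bdd _ _ _ _)
    have hmid : ‖∫ q : E3, (pZ α β q)⁻¹ * ∫ ω : Metric.sphere (0 : E3) 1,
        f (pPr α β p q ω) * g (qPr α β p q ω) *
          S₀ p q (pPr α β p q ω) (qPr α β p q ω) ∂sphMeas‖ₑ ≤
        ∫⁻ q, ENNReal.ofReal (pZ α β q)⁻¹ * (ENNReal.ofReal C₁ *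
          ∫⁻ ω : Metric.sphere (0 : E3) 1,
            ‖f (pPr α β p q ω)‖ₑ * ‖g (qPr α β p q ω)‖ₑ ∂sphMeas) := by
      refine (enorm_integral_le_lintegral_enorm _).trans (lintegral_mono fun q => ?_)
      rw [enorm_mul, hpinv]
      gcongr
      exact hinner q
    rw [Qplus, enorm_mul, enorm_mul, hpinv, Real.enorm_of_nonneg (by positivity : 0 ≤ α * β ^ 2)]
    refine (mul_le_mul_right (mul_le_mul_right hmid _) _).trans_eq ?_
    rw [← mul_assoc, ← lintegral_const_mul' _ _
        (ENNReal.mul_ne_top ENNReal.ofReal_ne_top ENNReal.ofReal_ne_top),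
      ← lintegral_const_mul' _ _ ENNReal.ofReal_ne_top]
    refine lintegral_congr fun q => ?_
    have h0 : 0 ≤ (pZ α β p)⁻¹ := inv_nonneg.2 (zero_le_one.trans (one_le_pZ α β p))
    rw [mul_inv, ENNReal.ofReal_mul h0, ENNReal.ofReal_mul (by positivity : 0 ≤ α * β ^ 2)]
    ring
  have hnorm : ∀ h : L1, ∫⁻ p, ‖h p‖ₑ = ENNReal.ofReal ‖h‖ := by
    intro h
    rw [ofReal_norm, Lp.enorm_def, eLpNorm_one_eq_lintegral_enorm]
  have htotal : ∫⁻ p, ‖(pZ α β p)⁻¹ * Qplus α β S₀ f g p‖ₑ ≤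
      ENNReal.ofReal (4 * π * C₁ * α * β ^ 2 * ‖f‖ * ‖g‖) := by
    have hK : Measurable fun z : E3 × E3 => ENNReal.ofReal ((pZ α β z.1 * pZ α β z.2)⁻¹) *
        ∫⁻ ω : Metric.sphere (0 : E3) 1,
          ‖f (pPr α β z.1 z.2 ω)‖ₑ * ‖g (qPr α β z.1 z.2 ω)‖ₑ ∂sphMeas := by
      refine Measurable.mul (by fun_prop) ?_
      exact (hG.comp (hp.prodMk hq)).lintegral_prod_right'
    calc _ ≤ ∫⁻ p, _ := lintegral_mono hbound
      _ = ENNReal.ofReal (α * β ^ 2 * C₁) * ∫⁻ z : E3 × E3,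
            ENNReal.ofReal ((pZ α β z.1 * pZ α β z.2)⁻¹) * ∫⁻ ω : Metric.sphere (0 : E3) 1,
              ‖f (pPr α β z.1 z.2 ω)‖ₑ * ‖g (qPr α β z.1 z.2 ω)‖ₑ ∂sphMeas := by
          rw [lintegral_const_mul' _ _ ENNReal.ofReal_ne_top, Measure.volume_eq_prod,
            lintegral_prod _ hK.aemeasurable]
      _ ≤ ENNReal.ofReal (α * β ^ 2 * C₁) *
            (ENNReal.ofReal (4 * π) * ∫⁻ z : E3 × E3, ‖f z.1‖ₑ * ‖g z.2‖ₑ) := by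
          gcongr
          exact lintegral_gain_le hα0 hβ0 _ hG
      _ = _ := by
          rw [Measure.volume_eq_prod, lintegral_prod_mul hf.enorm.aemeasurable
            hg.enorm.aemeasurable, hnorm, hnorm, ← ENNReal.ofReal_mul (norm_nonneg _),
            ← ENNReal.ofReal_mul (by positivity), ← ENNReal.ofReal_mul (by positivity)]
          congr 1
          ring
  refine ⟨⟨hmeas, htotal.trans_lt ENNReal.ofReal_lt_top⟩, ?_⟩
  have habs := integral_norm_eq_lintegral_enorm hmeas
  simp only [Real.norm_eq_abs] at habs
  rw [habs]
  exact ENNReal.toReal_le_of_le_ofReal (by positivity) htotal
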